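/- arXiv:1806.10182 — 3 statements merged into one kernel-verified Lean document; each statement's English description precedes it below -/
import Mathlib

section
/- (Non-negativity of the relative approximation error.) Let Q be a symmetric real n×n matrix with Q_{ii} > 0 for a fixed index i, let C > 0, and let α ∈ [0, C]^n. Define the single-step progress J(α, i, δ) = D(α + δ e_i) − D(α). For any approximate margin value m̃ ∈ ℝ, let δ̃ = [α_i + (1 − m̃)/Q_{ii}]_0^C − α_i be the approximate step and δ = [α_i + (1 − Q_i α)/Q_{ii}]_0^C − α_i the exact step. Then J(α, i, δ̃) ≤ J(α, i, δ); i.e., the progress made using any approximate margin never exceeds the progress of the exact coordinate ascent step. -/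
open Matrix Finset

/-- The dual SVM objective `D(α) = ∑ⱼ αⱼ − (1/2) αᵀ Q α`. -/
noncomputable def dualObj {n : ℕ} (Q : Matrix (Fin n) (Fin n) ℝ) (α : Fin n → ℝ) : ℝ :=
  (∑ j, α j) - (1 / 2) * (α ⬝ᵥ Q.mulVec α)

/-- Clamping of `a` to the interval `[0, C]`. -/
noncomputable def clamp (C a : ℝ) : ℝ := max 0 (min C a)

/-- The single-step progress `J(α, i, δ) = D(α + δ eᵢ) − D(α)`. -/
noncomputable def stepProgress {n : ℕ} (Q : Matrix (Fin n) (Fin n) ℝ)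
    (α : Fin n → ℝ) (i : Fin n) (δ : ℝ) : ℝ :=
  dualObj Q (α + δ • (Pi.single i 1 : Fin n → ℝ)) - dualObj Q α

/-- The progress along coordinate `i` is a quadratic in the step. -/
theorem stepProgress_eq_quadratic {n : ℕ} {Q : Matrix (Fin n) (Fin n) ℝ} (hQ : Q.IsSymm)
    (α : Fin n → ℝ) (i : Fin n) (δ : ℝ) :
    stepProgress Q α i δ = δ * (1 - Q i ⬝ᵥ α) - δ ^ 2 * Q i i / 2 := by
  have hrow : α ⬝ᵥ Q.col i = Q i ⬝ᵥ α := by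
    rw [dotProduct_comm]
    congr 1
    ext j
    exact hQ.apply i j
  have hmul : (Q *ᵥ α) i = Q i ⬝ᵥ α := rfl
  have hsum : ∑ j, δ * (Pi.single i 1 : Fin n → ℝ) j = δ := by
    rw [← mul_sum, Fintype.sum_pi_single', mul_one]
  simp only [stepProgress, dualObj, mulVec_add, mulVec_smul, dotProduct_add, add_dotProduct,
    smul_dotProduct, dotProduct_smul, mulVec_single_one, single_one_dotProduct, hrow, hmul,
    Pi.add_apply, Pi.smul_apply, sum_add_distrib, smul_eq_mul, col_apply, hsum]
  ring

theorem clamp_mem_Icc {C : ℝ} (hC : 0 ≤ C) (a : ℝ) : clamp C a ∈ Set.Icc 0 C :=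
  ⟨le_max_left _ _, max_le hC (min_le_left _ _)⟩

/-- Clamping is the projection onto `[0, C]`: its residual satisfies the variational inequality. -/
theorem sub_clamp_mul_sub_clamp_nonpos {C x : ℝ} (a : ℝ) (hx : x ∈ Set.Icc 0 C) :
    (a - clamp C a) * (x - clamp C a) ≤ 0 := by
  obtain ⟨h0, hxC⟩ := hx
  unfold clamp
  rcases le_total C a with h | h
  · rw [min_eq_left h, max_eq_right (h0.trans hxC)]
    exact mul_nonpos_of_nonneg_of_nonpos (by linarith) (by linarith)
  · rw [min_eq_right h]
    rcases le_total 0 a with h' | h'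
    · simp [max_eq_right h']
    · rw [max_eq_left h']
      exact mul_nonpos_of_nonpos_of_nonneg (by linarith) (by linarith)

/-- non-negativity of the relative approximation error: the progress made
using any approximate margin value `m̃` never exceeds the progress of the exact coordinate
ascent step. -/
theorem approx_step_progress_le_exact
    {n : ℕ} (hn : 1 ≤ n) (Q : Matrix (Fin n) (Fin n) ℝ) (hQsym : Q.IsSymm)
    (i : Fin n) (hQii : 0 < Q i i) (C : ℝ) (hC : 0 < C)
    (α : Fin n → ℝ) (hα : ∀ j, α j ∈ Set.Icc 0 C)
    (mtilde : ℝ) :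
    stepProgress Q α i (clamp C (α i + (1 - mtilde) / Q i i) - α i) ≤
      stepProgress Q α i (clamp C (α i + (1 - Q i ⬝ᵥ α) / Q i i) - α i) := by
  rw [stepProgress_eq_quadratic hQsym, stepProgress_eq_quadratic hQsym]
  have hx := clamp_mem_Icc hC.le (α i + (1 - mtilde) / Q i i)
  have hvar := sub_clamp_mul_sub_clamp_nonpos (α i + (1 - Q i ⬝ᵥ α) / Q i i) hx
  have hg : 1 - Q i ⬝ᵥ α = Q i i * ((1 - Q i ⬝ᵥ α) / Q i i) := by field_simp
  generalize clamp C (α i + (1 - mtilde) / Q i i) = x at *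
  generalize clamp C (α i + (1 - Q i ⬝ᵥ α) / Q i i) = y at *
  generalize (1 - Q i ⬝ᵥ α) / Q i i = t at *
  rw [hg]
  nlinarith [mul_nonneg hQii.le (neg_nonneg.2 hvar), mul_nonneg hQii.le (sq_nonneg (x - y))]
end

section
/- (Lemma 2, SGD part, per-coordinate deterministic version.) Let Q be a real n×n matrix, C > 0, and let (i_t)_{t≥1} be any sequence of indices in {1, …, n}. Define α^{(0)} ∈ ℝ^n arbitrarily and, for t ≥ 1, the Pegasos SGD iterates α^{(t)} = α^{(t-1)} − (1/t) α^{(t-1)} + 𝟙[Q_{i_t} α^{(t-1)} < 1] · (nC/t) · e_{i_t}. If α^{(t)} → α* as t → ∞, then for every fixed index i the fraction of margin-violating steps on coordinate i converges: (1/T) · |{ t ∈ {1, …, T} : i_t = i and Q_{i_t} α^{(t-1)} < 1 }| → α*_i / (nC) as T → ∞. -/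
open Matrix Filter Finset
open scoped Classical

/-- Scaling the SGD iterate by the step count telescopes the recursion: `T αᵢ⁽ᵀ⁾` is `nC` times
the number of margin-violating steps on coordinate `i`. -/
theorem sgd_mul_iterate_eq_mul_card_violations
    {n : ℕ} (Q : Matrix (Fin n) (Fin n) ℝ) (C : ℝ)
    (idx : ℕ → Fin n) (α : ℕ → Fin n → ℝ)
    (hrec : ∀ t : ℕ, 1 ≤ t →
      α t = α (t - 1) - (1 / (t : ℝ)) • α (t - 1) +
        (if Q (idx t) ⬝ᵥ α (t - 1) < 1 then (n * C / (t : ℝ)) else 0) •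
          (Pi.single (idx t) 1 : Fin n → ℝ))
    (i : Fin n) (T : ℕ) :
    (T : ℝ) * α T i = n * C *
      ((Finset.Icc 1 T).filter
        (fun t => idx t = i ∧ Q (idx t) ⬝ᵥ α (t - 1) < 1)).card := by
  induction T with
  | zero => simp
  | succ T ih =>
    have hstep := congrFun (hrec (T + 1) (Nat.le_add_left 1 T)) i
    have hT : ((T : ℝ) + 1) ≠ 0 := by positivity
    rw [← Finset.insert_Icc_right_eq_Icc_add_one (Nat.le_add_left 1 T), Finset.filter_insert]
    simp only [Nat.add_sub_cancel, Pi.add_apply, Pi.sub_apply, Pi.smul_apply, smul_eq_mul,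
      Nat.cast_add, Nat.cast_one] at hstep ⊢
    rw [hstep]
    by_cases hi : idx (T + 1) = i
    · by_cases hv : Q (idx (T + 1)) ⬝ᵥ α T < 1
      · rw [if_pos hv, if_pos ⟨hi, hv⟩, Finset.card_insert_of_notMem (by simp), hi,
          Pi.single_eq_same]
        push_cast
        rw [mul_add (n * C : ℝ), ← ih]
        field_simp
        ring
      · rw [if_neg hv, if_neg (fun h => hv h.2), ← ih]
        field_simp
        ring
    · rw [Pi.single_eq_of_ne (Ne.symm hi), mul_zero, if_neg (fun h => hi h.1), ← ih]
      field_simp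
      ring

/-- Lemma 2, SGD part, per-coordinate deterministic version: along any index
sequence, if the Pegasos SGD iterates converge to `α*`, then for every fixed coordinate `i`
the fraction of margin-violating steps on coordinate `i` converges to `α*ᵢ/(nC)`. -/
theorem sgd_margin_violation_fraction_per_coordinate
    {n : ℕ} (hn : 1 ≤ n) (Q : Matrix (Fin n) (Fin n) ℝ) (C : ℝ) (hC : 0 < C)
    (idx : ℕ → Fin n) (α : ℕ → Fin n → ℝ)
    (hrec : ∀ t : ℕ, 1 ≤ t →
      α t = α (t - 1) - (1 / (t : ℝ)) • α (t - 1) +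
        (if Q (idx t) ⬝ᵥ α (t - 1) < 1 then (n * C / (t : ℝ)) else 0) •
          (Pi.single (idx t) 1 : Fin n → ℝ))
    (αstar : Fin n → ℝ) (hlim : Tendsto α atTop (nhds αstar))
    (i : Fin n) :
    Tendsto (fun T : ℕ => (1 / (T : ℝ)) *
        ((Finset.Icc 1 T).filter
          (fun t => idx t = i ∧ Q (idx t) ⬝ᵥ α (t - 1) < 1)).card)
      atTop (nhds (αstar i / (n * C))) := by
  have hnC : (n * C : ℝ) ≠ 0 := mul_ne_zero (by exact_mod_cast (by omega : n ≠ 0)) hC.ne'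
  refine ((tendsto_pi_nhds.1 hlim i).div_const (n * C : ℝ)).congr' ?_
  filter_upwards [eventually_ne_atTop 0] with T hT
  have hT' : (T : ℝ) ≠ 0 := Nat.cast_ne_zero.2 hT
  rw [div_eq_iff hnC, one_div, mul_assoc, eq_inv_mul_iff_mul_eq₀ hT', mul_comm _ (n * C : ℝ)]
  exact sgd_mul_iterate_eq_mul_card_violations Q C idx α hrec i T
end

section
/- (Lemma 2, SGD part, total fraction of margin violations.) Let Q be a real n×n matrix, C > 0, and let (i_t)_{t≥1} be any sequence of indices in {1, …, n}. Define α^{(0)} ∈ ℝ^n arbitrarily and, for t ≥ 1, the Pegasos SGD iterates α^{(t)} = α^{(t-1)} − (1/t) α^{(t-1)} + 𝟙[Q_{i_t} α^{(t-1)} < 1] · (nC/t) · e_{i_t}. If α^{(t)} → α* as t → ∞, then the overall fraction of optimization steps in which the target margin is violated converges: (1/T) · |{ t ∈ {1, …, T} : Q_{i_t} α^{(t-1)} < 1 }| → (1/n) ∑_{i=1}^n α*_i / C as T → ∞. -/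
open Matrix Filter Finset
open scoped Classical

/-- Telescoping the Pegasos recursion: after `T` steps, `T` times the coordinate sum of the
iterate is `n * C` times the number of margin violations so far. -/
theorem natCast_mul_sum_eq_card_margin_violations
    {n : ℕ} (Q : Matrix (Fin n) (Fin n) ℝ) (C : ℝ) (idx : ℕ → Fin n) (α : ℕ → Fin n → ℝ)
    (hrec : ∀ t : ℕ, 1 ≤ t →
      α t = α (t - 1) - (1 / (t : ℝ)) • α (t - 1) +
        (if Q (idx t) ⬝ᵥ α (t - 1) < 1 then (n * C / (t : ℝ)) else 0) •
          (Pi.single (idx t) 1 : Fin n → ℝ)) (T : ℕ) :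
    (T : ℝ) * ∑ i, α T i =
      n * C * ((Finset.Icc 1 T).filter (fun t => Q (idx t) ⬝ᵥ α (t - 1) < 1)).card := by
  induction T with
  | zero => simp
  | succ T ih =>
    have hT : ((T : ℝ) + 1) ≠ 0 := by positivity
    have hsum : ∑ i, α (T + 1) i = ∑ i, α T i - (1 / ((T : ℝ) + 1)) * ∑ i, α T i +
        (if Q (idx (T + 1)) ⬝ᵥ α T < 1 then n * C / ((T : ℝ) + 1) else 0) := by
      rw [hrec (T + 1) (by lia)]
      simp only [add_tsub_cancel_right, Nat.cast_add, Nat.cast_one, Pi.add_apply, Pi.sub_apply,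
        Pi.smul_apply, smul_eq_mul, Finset.sum_add_distrib, Finset.sum_sub_distrib,
        ← Finset.mul_sum, Finset.sum_pi_single', Finset.mem_univ, if_true, mul_one]
    rw [hsum, ← Finset.insert_Icc_right_eq_Icc_add_one (by lia), Finset.filter_insert]
    push_cast
    split_ifs with h
    · rw [Finset.card_insert_of_notMem (by simp)]
      push_cast
      rw [mul_add, mul_add, ← ih]
      field_simp
      ring
    · rw [← ih]
      field_simp
      ring

/-- Lemma 2, SGD part, total fraction of margin violations: along any index
sequence, if the Pegasos SGD iterates converge to `α*`, then the overall fraction of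
optimization steps violating the target margin converges to `(1/n) ∑ᵢ α*ᵢ/C`. -/
theorem sgd_margin_violation_fraction_total
    {n : ℕ} (hn : 1 ≤ n) (Q : Matrix (Fin n) (Fin n) ℝ) (C : ℝ) (hC : 0 < C)
    (idx : ℕ → Fin n) (α : ℕ → Fin n → ℝ)
    (hrec : ∀ t : ℕ, 1 ≤ t →
      α t = α (t - 1) - (1 / (t : ℝ)) • α (t - 1) +
        (if Q (idx t) ⬝ᵥ α (t - 1) < 1 then (n * C / (t : ℝ)) else 0) •
          (Pi.single (idx t) 1 : Fin n → ℝ))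
    (αstar : Fin n → ℝ) (hlim : Tendsto α atTop (nhds αstar)) :
    Tendsto (fun T : ℕ => (1 / (T : ℝ)) *
        ((Finset.Icc 1 T).filter (fun t => Q (idx t) ⬝ᵥ α (t - 1) < 1)).card)
      atTop (nhds ((1 / n : ℝ) * ∑ i, αstar i / C)) := by
  have hn' : (n : ℝ) ≠ 0 := by positivity
  have hsum : Tendsto (fun T => (1 / n : ℝ) * ∑ i, α T i / C) atTop
      (nhds ((1 / n : ℝ) * ∑ i, αstar i / C)) :=
    (tendsto_finsetSum _ fun i _ => (tendsto_pi_nhds.mp hlim i).div_const C).const_mul _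
  refine hsum.congr' ?_
  filter_upwards [eventually_gt_atTop 0] with T hT
  have hT' : (T : ℝ) ≠ 0 := by positivity
  have key := natCast_mul_sum_eq_card_margin_violations Q C idx α hrec T
  rw [← Finset.sum_div]
  field_simp
  linarith
end
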